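/- Let X and Y be separable metric spaces. Let (x_{n,i}) be a deterministic triangular array in X with empirical measures μ_n = n^{-1} Σ_{i=1}^n δ_{x_{n,i}} ⇒ P_X weakly. Let Q_n, Q : X × B(Y) → [0,1] be Markov kernels such that Q_n(x_n, ·) ⇒ Q(x, ·) weakly whenever x_n → x, and x ↦ Q(x, ·) is weakly continuous. Then P_n(d(x,y)) := n^{-1} Σ_{i=1}^n Q_n(x, dy) δ_{x_{n,i}}(dx) converges weakly to P_{X,Y}(d(x,y)) := Q(x, dy) P_X(dx) on X × Y. -/

import Mathlib

open MeasureTheory Filter Topology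

/-!
The theorem is two applications of one fact, the extended continuous mapping theorem in integral
form (`tendsto_integral_of_continuous_convergence`): if finite measures `ν n` converge weakly to
`ν` and uniformly bounded functions `g n` converge continuously to `g` (`g n (z n) → g y` whenever
`z n → y`), then `∫ g n ∂(ν n) → ∫ g ∂ν`. It is first applied on `𝕐` to `f (xs n, ·)` and
`Qn n (xs n)`, which shows that `h n a = ∫ b, f (a, b) ∂(Qn n a)` converges continuously to
`h a = ∫ b, f (a, b) ∂(Q a)`, and then on `𝕏` to `h n` and the empirical measures.

The fact itself needs neither tightness nor Skorokhod representation. The functions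
`lowerEnvelope g k` are bounded and Lipschitz, lie below every `g n` with `n ≥ k`, and converge
pointwise to `g`, which gives `∫ g ∂ν ≤ liminf ∫ g n ∂(ν n)`; the upper bound is the same statement
for `-g n`.
-/

/-- The Lipschitz lower envelope (Pasch–Hausdorff regularisation, with constant `k`) of the tail
`g k, g (k + 1), …` of a sequence of functions. It is meaningful when the `g n` are uniformly
bounded below; otherwise the real infimum takes its junk value. -/
noncomputable def lowerEnvelope {E : Type*} [PseudoMetricSpace E] (g : ℕ → E → ℝ) (k : ℕ)
    (y : E) : ℝ :=
  ⨅ p : {n : ℕ // k ≤ n} × E, (g p.1 p.2 + k * dist y p.2)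

section Envelope

variable {E : Type*} [PseudoMetricSpace E] {g : ℕ → E → ℝ} {C : ℝ}

lemma lowerEnvelope_bddBelow (hC : ∀ n y, |g n y| ≤ C) (k : ℕ) (y : E) :
    BddBelow (Set.range fun p : {n : ℕ // k ≤ n} × E => g p.1 p.2 + k * dist y p.2) := by
  refine ⟨-C, ?_⟩
  rintro _ ⟨p, rfl⟩
  have h1 := (abs_le.1 (hC p.1 p.2)).1
  have h2 : (0 : ℝ) ≤ k * dist y p.2 := by positivity
  simp only
  linarith

lemma lowerEnvelope_le_add (hC : ∀ n y, |g n y| ≤ C) {k n : ℕ} (hn : k ≤ n) (y z : E) :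
    lowerEnvelope g k y ≤ g n z + k * dist y z :=
  ciInf_le (lowerEnvelope_bddBelow hC k y) (⟨n, hn⟩, z)

lemma lowerEnvelope_le (hC : ∀ n y, |g n y| ≤ C) {k n : ℕ} (hn : k ≤ n) (y : E) :
    lowerEnvelope g k y ≤ g n y := by
  simpa using lowerEnvelope_le_add hC hn y y

lemma le_lowerEnvelope {k : ℕ} {y : E} {c : ℝ}
    (h : ∀ n, k ≤ n → ∀ z, c ≤ g n z + k * dist y z) : c ≤ lowerEnvelope g k y := by
  have : Nonempty ({n : ℕ // k ≤ n} × E) := ⟨(⟨k, le_rfl⟩, y)⟩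
  exact le_ciInf fun p => h p.1 p.1.2 p.2

lemma abs_lowerEnvelope_le (hC : ∀ n y, |g n y| ≤ C) (k : ℕ) (y : E) :
    |lowerEnvelope g k y| ≤ C := by
  refine abs_le.2 ⟨le_lowerEnvelope fun n _ z => ?_,
    (lowerEnvelope_le hC le_rfl y).trans (abs_le.1 (hC k y)).2⟩
  have h1 := (abs_le.1 (hC n z)).1
  have h2 : (0 : ℝ) ≤ k * dist y z := by positivity
  linarith

lemma lowerEnvelope_continuous (hC : ∀ n y, |g n y| ≤ C) (k : ℕ) :
    Continuous (lowerEnvelope g k) := by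
  refine (LipschitzWith.of_le_add_mul (k : NNReal) fun y y' => ?_).continuous
  rw [← sub_le_iff_le_add]
  refine le_lowerEnvelope fun n hn z => ?_
  have h1 := lowerEnvelope_le_add hC hn y z
  have h2 : (k : ℝ) * dist y z ≤ k * (dist y y' + dist y' z) :=
    mul_le_mul_of_nonneg_left (dist_triangle _ _ _) (Nat.cast_nonneg k)
  simp only [NNReal.coe_natCast]
  linarith

/-- Under continuous convergence, the envelopes of the tails recover the limit: near `y` the tail
is almost at least `a`, and away from `y` the penalty `k * dist` outweighs the bound `C`. -/
lemma tendsto_lowerEnvelope (hC : ∀ n y, |g n y| ≤ C) {y : E} {a : ℝ}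
    (hg : Tendsto (fun p : ℕ × E => g p.1 p.2) (atTop ×ˢ 𝓝 y) (𝓝 a)) :
    Tendsto (fun k => lowerEnvelope g k y) atTop (𝓝 a) := by
  have hconst : Tendsto (fun n => g n y) atTop (𝓝 a) :=
    hg.comp (tendsto_id.prodMk tendsto_const_nhds)
  have haC : a ≤ C := le_of_tendsto hconst (.of_forall fun n => (abs_le.1 (hC n y)).2)
  refine tendsto_order.2 ⟨fun b hb => ?_, fun b hb => ?_⟩
  · obtain ⟨c, hbc, hca⟩ := exists_between hb
    have hev := hg.eventually (lt_mem_nhds hca)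
    obtain ⟨⟨N, δ⟩, ⟨-, hδ⟩, hsub⟩ :=
      (atTop_basis.prod Metric.nhds_basis_ball).eventually_iff.1 hev
    simp only at hδ
    obtain ⟨M, hM⟩ := exists_nat_ge (2 * C / δ)
    filter_upwards [eventually_ge_atTop (max N M)] with k hk
    refine hbc.trans_le (le_lowerEnvelope fun n hn z => ?_)
    have hpen : (0 : ℝ) ≤ k * dist y z := by positivity
    by_cases hz : dist z y < δ
    · have : c < g n z :=
        hsub (x := (n, z)) ⟨((le_max_left _ _).trans hk).trans hn, hz⟩
      linarith
    · have hMk : (M : ℝ) ≤ k := by exact_mod_cast (le_max_right _ _).trans hk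
      have h1 : 2 * C ≤ k * δ := (div_le_iff₀ hδ).1 (hM.trans hMk)
      have h2 : (k : ℝ) * δ ≤ k * dist y z := by
        rw [dist_comm]
        exact mul_le_mul_of_nonneg_left (not_lt.1 hz) (Nat.cast_nonneg k)
      have h3 := (abs_le.1 (hC n z)).1
      linarith
  · filter_upwards [hconst.eventually (gt_mem_nhds hb)] with k hk
    exact (lowerEnvelope_le hC le_rfl y).trans_lt hk

end Envelope

section Mapping

variable {E : Type*} [PseudoMetricSpace E] [MeasurableSpace E] [OpensMeasurableSpace E]
  {ν : ℕ → Measure E} {νlim : Measure E} [∀ n, IsFiniteMeasure (ν n)] [IsFiniteMeasure νlim]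
  {g : ℕ → E → ℝ} {glim : E → ℝ} {C : ℝ}

/-- The lower half of the extended continuous mapping theorem:
`∫ glim ∂νlim ≤ liminf ∫ g n ∂(ν n)`. -/
lemma eventually_lt_integral_of_continuous_convergence
    (hν : ∀ f : BoundedContinuousFunction E ℝ,
      Tendsto (fun n => ∫ y, f y ∂(ν n)) atTop (𝓝 (∫ y, f y ∂νlim)))
    (hC : ∀ n y, |g n y| ≤ C) (hint : ∀ n, Integrable (g n) (ν n))
    (hg : ∀ y, Tendsto (fun p : ℕ × E => g p.1 p.2) (atTop ×ˢ 𝓝 y) (𝓝 (glim y)))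
    {b : ℝ} (hb : b < ∫ y, glim y ∂νlim) :
    ∀ᶠ n in atTop, b < ∫ y, g n y ∂(ν n) := by
  have hdom : Tendsto (fun k => ∫ y, lowerEnvelope g k y ∂νlim) atTop
      (𝓝 (∫ y, glim y ∂νlim)) :=
    tendsto_integral_of_dominated_convergence (fun _ => C)
      (fun k => (lowerEnvelope_continuous hC k).measurable.aestronglyMeasurable)
      (integrable_const C)
      (fun k => .of_forall fun y => abs_lowerEnvelope_le hC k y)
      (.of_forall fun y => tendsto_lowerEnvelope hC (hg y))
  obtain ⟨k, hk⟩ := (hdom.eventually (lt_mem_nhds hb)).exists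
  let φ : BoundedContinuousFunction E ℝ :=
    .ofNormedAddCommGroup (lowerEnvelope g k) (lowerEnvelope_continuous hC k) C
      (abs_lowerEnvelope_le hC k)
  filter_upwards [(hν φ).eventually (lt_mem_nhds hk), eventually_ge_atTop k] with n hn hkn
  exact hn.trans_le (integral_mono (φ.integrable (ν n)) (hint n) (lowerEnvelope_le hC hkn))

/-- The extended continuous mapping theorem in integral form: weak convergence of finite measures
may be tested against a uniformly bounded, continuously convergent sequence of functions. -/
lemma tendsto_integral_of_continuous_convergence
    (hν : ∀ f : BoundedContinuousFunction E ℝ,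
      Tendsto (fun n => ∫ y, f y ∂(ν n)) atTop (𝓝 (∫ y, f y ∂νlim)))
    (hC : ∀ n y, |g n y| ≤ C) (hint : ∀ n, Integrable (g n) (ν n))
    (hg : ∀ y, Tendsto (fun p : ℕ × E => g p.1 p.2) (atTop ×ˢ 𝓝 y) (𝓝 (glim y))) :
    Tendsto (fun n => ∫ y, g n y ∂(ν n)) atTop (𝓝 (∫ y, glim y ∂νlim)) := by
  refine tendsto_order.2
    ⟨fun b hb => eventually_lt_integral_of_continuous_convergence hν hC hint hg hb,
      fun b hb => ?_⟩
  have h := eventually_lt_integral_of_continuous_convergence (g := fun n y => -g n y)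
    (glim := fun y => -glim y) (C := C) (b := -b) hν (by simpa using hC)
    (fun n => (hint n).neg) (fun y => (hg y).neg) (by rw [integral_neg]; linarith)
  filter_upwards [h] with n hn
  rw [integral_neg] at hn
  linarith

end Mapping

/-- Continuous convergence along sequences is joint convergence along `atTop ×ˢ 𝓝 y`. -/
lemma tendsto_prod_nhds_of_seq {E : Type*} [PseudoMetricSpace E] {g : ℕ → E → ℝ} {y : E} {a : ℝ}
    (h : ∀ z : ℕ → E, Tendsto z atTop (𝓝 y) → Tendsto (fun n => g n (z n)) atTop (𝓝 a)) :
    Tendsto (fun p : ℕ × E => g p.1 p.2) (atTop ×ˢ 𝓝 y) (𝓝 a) := by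
  refine tendsto_of_seq_tendsto fun u hu => tendsto_of_subseq_tendsto fun ns hns => ?_
  have hu' := hu.comp hns
  have h1 : Tendsto (fun k => (u (ns k)).1) atTop atTop := tendsto_fst.comp hu'
  have h2 : Tendsto (fun k => (u (ns k)).2) atTop (𝓝 y) := tendsto_snd.comp hu'
  obtain ⟨ψ, hψ, hmono⟩ := strictMono_subseq_of_tendsto_atTop h1
  refine ⟨ψ, ?_⟩
  let m : ℕ → ℕ := fun k => (u (ns (ψ k))).1
  have hmono' : StrictMono m := hmono
  -- Fill the gaps of the subsequence with `y` to obtain a full sequence converging to `y`.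
  let z : ℕ → E := Function.extend m (fun k => (u (ns (ψ k))).2) fun _ => y
  have hzm : ∀ k, z (m k) = (u (ns (ψ k))).2 := fun k => hmono'.injective.extend_apply _ _ k
  have hz : Tendsto z atTop (𝓝 y) := by
    intro U hU
    have hev := (h2.comp hψ.tendsto_atTop).eventually hU
    obtain ⟨K, hK⟩ := eventually_atTop.1 hev
    refine eventually_atTop.2 ⟨m K, fun n hn => ?_⟩
    by_cases hr : ∃ k, m k = n
    · obtain ⟨k, rfl⟩ := hr
      rw [hzm]
      exact hK k (hmono'.le_iff_le.1 hn)
    · rw [show z n = y from Function.extend_apply' _ _ _ hr]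
      exact mem_of_mem_nhds hU
  have := (h z hz).comp hmono'.tendsto_atTop
  refine this.congr fun k => ?_
  simp only [Function.comp_apply]
  rw [hzm]

/-- Weak convergence of `P_n(d(x,y)) = n⁻¹ Σ_i Q_n(x, dy) δ_{x_{n,i}}(dx)`
to `P_{X,Y}(d(x,y)) = Q(x, dy) P_X(dx)`, when the empirical measures of the deterministic
covariates converge weakly to `P_X`, the Markov kernels `Q_n` converge continuously to `Q`
in the weak topology, and `x ↦ Q(x, ·)` is weakly continuous. Weak convergence is expressed
through integrals of bounded continuous functions. -/
theorem conditional_model_weak_convergence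
    {𝕏 𝕐 : Type*} [MetricSpace 𝕏] [TopologicalSpace.SeparableSpace 𝕏]
    [MeasurableSpace 𝕏] [BorelSpace 𝕏]
    [MetricSpace 𝕐] [TopologicalSpace.SeparableSpace 𝕐]
    [MeasurableSpace 𝕐] [BorelSpace 𝕐]
    (x : ℕ → ℕ → 𝕏) (PX : Measure 𝕏) [IsProbabilityMeasure PX]
    (hemp : ∀ f : BoundedContinuousFunction 𝕏 ℝ,
      Tendsto (fun n : ℕ => (n : ℝ)⁻¹ * ∑ i ∈ Finset.range n, f (x n i)) atTop
        (𝓝 (∫ a, f a ∂PX)))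
    (Qn : ℕ → ProbabilityTheory.Kernel 𝕏 𝕐) (Q : ProbabilityTheory.Kernel 𝕏 𝕐)
    [∀ n, ProbabilityTheory.IsMarkovKernel (Qn n)] [ProbabilityTheory.IsMarkovKernel Q]
    (hQn : ∀ (x₀ : 𝕏) (xs : ℕ → 𝕏), Tendsto xs atTop (𝓝 x₀) →
      ∀ g : BoundedContinuousFunction 𝕐 ℝ,
        Tendsto (fun n => ∫ b, g b ∂(Qn n (xs n))) atTop (𝓝 (∫ b, g b ∂(Q x₀))))
    (hQ : ∀ (x₀ : 𝕏) (xs : ℕ → 𝕏), Tendsto xs atTop (𝓝 x₀) →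
      ∀ g : BoundedContinuousFunction 𝕐 ℝ,
        Tendsto (fun n => ∫ b, g b ∂(Q (xs n))) atTop (𝓝 (∫ b, g b ∂(Q x₀)))) :
    ∀ f : BoundedContinuousFunction (𝕏 × 𝕐) ℝ,
      Tendsto
        (fun n : ℕ => (n : ℝ)⁻¹ * ∑ i ∈ Finset.range n, ∫ b, f (x n i, b) ∂(Qn n (x n i)))
        atTop (𝓝 (∫ a, (∫ b, f (a, b) ∂(Q a)) ∂PX)) := by
  intro f
  have hfC : ∀ a b, |f (a, b)| ≤ ‖f‖ := fun a b => f.norm_coe_le_norm (a, b)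
  have hfint : ∀ (κ : Measure 𝕐) [IsFiniteMeasure κ] (a : 𝕏), Integrable (fun b => f (a, b)) κ :=
    fun κ _ a => (f.compContinuous ⟨fun b => (a, b), by fun_prop⟩).integrable κ
  let h : ℕ → 𝕏 → ℝ := fun n a => ∫ b, f (a, b) ∂(Qn n a)
  have hhC : ∀ n a, |h n a| ≤ ‖f‖ := fun n a => by
    simpa [h] using norm_integral_le_of_norm_le_const (μ := Qn n a) (f := fun b => f (a, b))
      (.of_forall fun b => f.norm_coe_le_norm (a, b))
  have hh : ∀ a, Tendsto (fun p : ℕ × 𝕏 => h p.1 p.2) (atTop ×ˢ 𝓝 a)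
      (𝓝 (∫ b, f (a, b) ∂(Q a))) := fun a => by
    refine tendsto_prod_nhds_of_seq fun z hz => ?_
    refine tendsto_integral_of_continuous_convergence (ν := fun n => Qn n (z n))
      (g := fun n b => f (z n, b)) (glim := fun b => f (a, b)) (C := ‖f‖)
      (hQn a z hz) (fun n b => hfC _ b) (fun n => hfint _ _) fun b => ?_
    exact (f.continuous.tendsto (a, b)).comp
      ((hz.comp tendsto_fst).prodMk_nhds tendsto_snd)
  -- The weight is taken in `ℝ≥0`, so that the junk value `0⁻¹ = 0` keeps the measure finite at
  -- `n = 0`.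
  let μ : ℕ → Measure 𝕏 := fun n =>
    (n : NNReal)⁻¹ • ∑ i ∈ Finset.range n, Measure.dirac (x n i)
  have hdirac : ∀ n (φ : 𝕏 → ℝ), ∀ i ∈ Finset.range n,
      Integrable φ (Measure.dirac (x n i)) := fun n φ i _ => integrable_dirac (by simp)
  have hμ : ∀ n (φ : 𝕏 → ℝ),
      ∫ a, φ a ∂(μ n) = (n : ℝ)⁻¹ * ∑ i ∈ Finset.range n, φ (x n i) := fun n φ => by
    simp only [μ]
    rw [integral_smul_nnreal_measure, integral_finsetSum_measure (hdirac n φ)]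
    simp [NNReal.smul_def]
  have hμint : ∀ n (φ : 𝕏 → ℝ), Integrable φ (μ n) := fun n φ =>
    (integrable_finsetSum_measure.2 (hdirac n φ)).smul_measure_nnreal
  have : ∀ n, IsFiniteMeasure (μ n) := fun n => by
    simp only [μ]; infer_instance
  have key := tendsto_integral_of_continuous_convergence (ν := μ) (νlim := PX)
    (fun φ => by simpa only [hμ] using hemp φ) hhC (fun n => hμint n (h n)) hh
  simpa only [hμ] using key
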